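/- arXiv:2308.16731 — 4 statements merged into one kernel-verified Lean document; each statement's English description precedes it below -/
import Mathlib

section
/- (Truncated moment problem on [-1,1]; one-dimensional case of Proposition 2.1.) Let d ≥ 1 and let μ = (μ_0, …, μ_{2d}) ∈ ℝ^{2d+1} satisfy μ_0 = 1, 𝓜_d(μ) is PSD, and 𝓜_{d−1}(μ; 1−x²) is PSD. Then there exists a Borel probability measure ν on ℝ with ν([-1,1]) = 1 such that ∫ x^k dν(x) = μ_k for all 0 ≤ k ≤ d. -/
/-!
Positivity of `momentMatrix d μ` realises `μ` as `μ (i + j) = ⟪v i, v j⟫` for vectors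
`v 0, …, v d`, on which the shift `v i ↦ v (i + 1)` plays the role of multiplication by `x`.
Positivity of `locMomentMatrix d μ` says exactly that this shift is well defined and contractive on
`W = span {v 0, …, v (d - 1)}`. Compressing it to `W` yields a contraction `A`, symmetric because
`⟪v i, v j⟫` depends only on `i + j`, with `A ^ i (v 0) = v i` as long as `v i` stays in `W`. The
spectral measure of `A` at `v 0` lives on `[-1, 1]` and has moments `⟪v 0, A ^ k (v 0)⟫`; moving
`d - 1` of the factors `A` to the left-hand side shows that these equal `μ k` for all `k < 2 * d`.
-/

open MeasureTheory

/-- The degree-`d` moment matrix `𝓜_d(μ)` with entries `μ (m+n)`. -/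
noncomputable def momentMatrix (d : ℕ) (μ : ℕ → ℝ) : Matrix (Fin (d+1)) (Fin (d+1)) ℝ :=
  fun m n => μ (m.1 + n.1)

/-- The localized moment matrix `𝓜_{d-1}(μ; 1 - x²)` with entries `μ (m+n) - μ (m+n+2)`. -/
noncomputable def locMomentMatrix (d : ℕ) (μ : ℕ → ℝ) : Matrix (Fin d) (Fin d) ℝ :=
  fun m n => μ (m.1 + n.1) - μ (m.1 + n.1 + 2)

section SpectralMeasure

open scoped InnerProductSpace

variable {𝕜 E : Type*} [RCLike 𝕜] [NormedAddCommGroup E] [InnerProductSpace 𝕜 E]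
  [FiniteDimensional 𝕜 E] {A : E →ₗ[𝕜] E}

/-- The spectral measure at `w` of a symmetric operator on a finite-dimensional space: each
eigenvalue is charged with the squared norm of the component of `w` along its eigenvector. -/
noncomputable def spectralMeasure (hA : A.IsSymmetric) (w : E) : Measure ℝ :=
  ∑ i, ‖⟪hA.eigenvectorBasis rfl i, w⟫_𝕜‖ₑ ^ 2 • Measure.dirac (hA.eigenvalues rfl i)

instance isFiniteMeasure_spectralMeasure (hA : A.IsSymmetric) (w : E) :
    IsFiniteMeasure (spectralMeasure hA w) :=
  ⟨by simp [spectralMeasure, ENNReal.sum_lt_top]⟩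

theorem integral_spectralMeasure {F : Type*} [NormedAddCommGroup F] [NormedSpace ℝ F]
    [CompleteSpace F] (hA : A.IsSymmetric) (w : E) (f : ℝ → F) :
    ∫ x, f x ∂spectralMeasure hA w =
      ∑ i, ‖⟪hA.eigenvectorBasis rfl i, w⟫_𝕜‖ ^ 2 • f (hA.eigenvalues rfl i) := by
  have hint (i) : Integrable f (‖⟪hA.eigenvectorBasis rfl i, w⟫_𝕜‖ₑ ^ 2 •
      Measure.dirac (hA.eigenvalues rfl i)) :=
    (integrable_dirac enorm_lt_top).smul_measure (by simp)
  simp [spectralMeasure, integral_finsetSum_measure fun i _ ↦ hint i]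

theorem inner_eigenvectorBasis_pow_apply (hA : A.IsSymmetric) {n : ℕ}
    (hn : Module.finrank 𝕜 E = n) (i : Fin n) (k : ℕ) (w : E) :
    ⟪hA.eigenvectorBasis hn i, (A ^ k) w⟫_𝕜 =
      (hA.eigenvalues hn i : 𝕜) ^ k * ⟪hA.eigenvectorBasis hn i, w⟫_𝕜 := by
  rw [← hA.pow k, (hA.hasEigenvector_eigenvectorBasis hn i).pow_apply, inner_smul_left, map_pow,
    RCLike.conj_ofReal]

theorem integral_pow_spectralMeasure (hA : A.IsSymmetric) (w : E) (k : ℕ) :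
    ∫ x, x ^ k ∂spectralMeasure hA w = RCLike.re ⟪w, (A ^ k) w⟫_𝕜 := by
  rw [integral_spectralMeasure, ← (hA.eigenvectorBasis rfl).sum_inner_mul_inner w, map_sum]
  refine Finset.sum_congr rfl fun i _ ↦ ?_
  rw [inner_eigenvectorBasis_pow_apply, mul_left_comm, ← RCLike.ofReal_pow, RCLike.re_ofReal_mul,
    inner_mul_symm_re_eq_norm, norm_mul, norm_inner_symm w, smul_eq_mul, mul_comm, sq]

theorem abs_eigenvalues_le (hA : A.IsSymmetric) {r : ℝ} (hr : ∀ x, ‖A x‖ ≤ r * ‖x‖) {n : ℕ}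
    (hn : Module.finrank 𝕜 E = n) (i : Fin n) : |hA.eigenvalues hn i| ≤ r := by
  simpa [norm_smul] using hr (hA.eigenvectorBasis hn i)

theorem spectralMeasure_compl_Icc (hA : A.IsSymmetric) {r : ℝ} (hr : ∀ x, ‖A x‖ ≤ r * ‖x‖)
    (w : E) : spectralMeasure hA w (Set.Icc (-r) r)ᶜ = 0 := by
  simp [spectralMeasure, measurableSet_Icc.compl, ← abs_le, abs_eigenvalues_le hA hr]

end SpectralMeasure

section Compression

open scoped InnerProductSpace

theorem exists_comp_rangeRestrict_eq {R M N P : Type*} [Ring R] [AddCommGroup M] [Module R M]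
    [AddCommGroup N] [Module R N] [AddCommGroup P] [Module R P] {S : M →ₗ[R] N} {T : M →ₗ[R] P}
    (h : S.ker ≤ T.ker) : ∃ B : S.range →ₗ[R] P, B ∘ₗ S.rangeRestrict = T := by
  refine ⟨S.ker.liftQ T h ∘ₗ S.quotKerEquivRange.symm, LinearMap.ext fun c ↦ ?_⟩
  exact congrArg (S.ker.liftQ T h) (S.quotKerEquivRange_symm_apply_image c (S.mem_range_self c))

variable {𝕜 E : Type*} [RCLike 𝕜] [NormedAddCommGroup E] [InnerProductSpace 𝕜 E]

theorem exists_isSymmetric_compression {V : Type*} [AddCommGroup V] [Module 𝕜 V]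
    {S T : V →ₗ[𝕜] E} [S.range.HasOrthogonalProjection] (hTS : ∀ c, ‖T c‖ ≤ ‖S c‖)
    (hsymm : ∀ a c, ⟪T a, S c⟫_𝕜 = ⟪S a, T c⟫_𝕜) :
    ∃ A : S.range →ₗ[𝕜] S.range, A.IsSymmetric ∧ (∀ x, ‖A x‖ ≤ ‖x‖) ∧
      ∀ c, A (S.rangeRestrict c) = S.range.orthogonalProjectionOnto (T c) := by
  have hker : S.ker ≤ T.ker := fun c hc ↦ norm_le_zero_iff.mp <| (hTS c).trans_eq <| by
    rw [LinearMap.mem_ker.mp hc, norm_zero]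
  obtain ⟨B, rfl⟩ := exists_comp_rangeRestrict_eq hker
  refine ⟨S.range.orthogonalProjectionOnto.toLinearMap ∘ₗ B, ?_, ?_, fun c ↦ rfl⟩
  · rintro ⟨_, a, rfl⟩ ⟨_, c, rfl⟩
    simpa using! hsymm a c
  · rintro ⟨_, c, rfl⟩
    exact (S.range.norm_orthogonalProjectionOnto_apply_le _).trans (hTS c)

theorem exists_isSymmetric_contraction_inner_pow_eq {d : ℕ} {v : Fin (d + 1) → E}
    (hcontr : ∀ c : Fin d → 𝕜, ‖∑ i, c i • v i.succ‖ ≤ ‖∑ i, c i • v i.castSucc‖)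
    (hhankel : ∀ i j : Fin d, ⟪v i.succ, v j.castSucc⟫_𝕜 = ⟪v i.castSucc, v j.succ⟫_𝕜) :
    ∃ (W : Submodule 𝕜 E) (_ : FiniteDimensional 𝕜 W) (A : W →ₗ[𝕜] W) (w : W),
      A.IsSymmetric ∧ (∀ x, ‖A x‖ ≤ ‖x‖) ∧
      ∀ (i : Fin d) (j : Fin (d + 1)),
        ⟪w, (A ^ (i + j : ℕ)) w⟫_𝕜 = ⟪v i.castSucc, v j⟫_𝕜 := by
  set S := Fintype.linearCombination 𝕜 fun i : Fin d ↦ v i.castSucc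
  set T := Fintype.linearCombination 𝕜 fun i : Fin d ↦ v i.succ
  have hsymm (a c) : ⟪T a, S c⟫_𝕜 = ⟪S a, T c⟫_𝕜 := by
    simp only [S, T, Fintype.linearCombination_apply, sum_inner, inner_sum, inner_smul_left,
      inner_smul_right, hhankel]
  obtain ⟨A, hA, hnorm, hAS⟩ := exists_isSymmetric_compression hcontr hsymm
  set P := S.range.orthogonalProjectionOnto
  have hS (i : Fin d) : v i.castSucc = S.rangeRestrict (Pi.single i 1) := by simp [S]
  have hPv (i : Fin d) : P (v i.castSucc) = S.rangeRestrict (Pi.single i 1) := by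
    rw [hS, Submodule.orthogonalProjectionOnto_mem_subspace_eq_self]
  have hpow (j : Fin (d + 1)) : (A ^ (j : ℕ)) (P (v 0)) = P (v j) := by
    induction j using Fin.induction with
    | zero => simp
    | succ i ih =>
      rw [Fin.val_succ, pow_succ', Module.End.mul_apply, ← Fin.val_castSucc, ih, hPv, hAS]
      simp [T]
  refine ⟨S.range, inferInstance, A, P (v 0), hA, hnorm, fun i j ↦ ?_⟩
  calc ⟪P (v 0), (A ^ (i + j : ℕ)) (P (v 0))⟫_𝕜
      = ⟪(A ^ (i : ℕ)) (P (v 0)), (A ^ (j : ℕ)) (P (v 0))⟫_𝕜 := by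
        rw [pow_add, Module.End.mul_apply, hA.pow]
    _ = ⟪P (v i.castSucc), P (v j)⟫_𝕜 := by rw [← Fin.val_castSucc, hpow, hpow]
    _ = ⟪v i.castSucc, v j⟫_𝕜 := by
        rw [hPv, Submodule.inner_orthogonalProjectionOnto_eq_of_mem_left, ← hS]

end Compression

section Gram

open scoped ComplexOrder MatrixOrder InnerProductSpace

variable {𝕜 n : Type*} [RCLike 𝕜] [Fintype n]

theorem exists_gram_eq_of_posSemidef {M : Matrix n n 𝕜} (hM : M.PosSemidef) :
    ∃ v : n → EuclideanSpace 𝕜 n, Matrix.gram 𝕜 v = M := by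
  classical
  obtain ⟨B, rfl⟩ := CStarAlgebra.nonneg_iff_eq_star_mul_self.mp hM.nonneg
  exact ⟨fun j ↦ WithLp.toLp 2 (B.col j),
    Matrix.gram_eq_conjTranspose_mul (EuclideanSpace.basisFun n 𝕜) _⟩

theorem norm_sum_smul_le_of_posSemidef_gram_sub_gram {E : Type*} [SeminormedAddCommGroup E]
    [InnerProductSpace 𝕜 E] {u v : n → E}
    (h : (Matrix.gram 𝕜 v - Matrix.gram 𝕜 u).PosSemidef) (c : n → 𝕜) :
    ‖∑ i, c i • u i‖ ≤ ‖∑ i, c i • v i‖ := by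
  have hc := h.re_dotProduct_nonneg c
  rw [Matrix.sub_mulVec, dotProduct_sub, Matrix.star_dotProduct_gram_mulVec,
    Matrix.star_dotProduct_gram_mulVec, map_sub, inner_self_eq_norm_sq, inner_self_eq_norm_sq,
    sub_nonneg] at hc
  exact pow_le_pow_iff_left₀ (norm_nonneg _) (norm_nonneg _) two_ne_zero |>.mp hc

end Gram

theorem statement0_general {d : ℕ} {μ : ℕ → ℝ} (hM : (momentMatrix d μ).PosSemidef)
    (hM' : (locMomentMatrix d μ).PosSemidef) :
    ∃ ν : Measure ℝ, IsFiniteMeasure ν ∧ ν (Set.Icc (-1 : ℝ) 1)ᶜ = 0 ∧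
      ∀ k < 2 * d, ∫ x, x ^ k ∂ν = μ k := by
  obtain ⟨v, hv⟩ := exists_gram_eq_of_posSemidef hM
  have hinner (i j : Fin (d + 1)) : inner ℝ (v i) (v j) = μ (i + j) :=
    congrFun (congrFun hv i) j
  have hloc : locMomentMatrix d μ =
      Matrix.gram ℝ (fun i : Fin d ↦ v i.castSucc) - Matrix.gram ℝ fun i ↦ v i.succ := by
    ext i j
    simp [locMomentMatrix, hinner, add_add_add_comm]
  obtain ⟨W, _, A, w, hA, hnorm, hmoment⟩ :=
    exists_isSymmetric_contraction_inner_pow_eq (v := v)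
      (norm_sum_smul_le_of_posSemidef_gram_sub_gram (hloc ▸ hM'))
      fun i j ↦ by simp [hinner, add_right_comm, add_assoc]
  refine ⟨spectralMeasure hA w, inferInstance,
    spectralMeasure_compl_Icc hA (by simpa using hnorm) w, fun k hk ↦ ?_⟩
  obtain ⟨i, j, rfl⟩ : ∃ (i : Fin d) (j : Fin (d + 1)), (i + j : ℕ) = k :=
    ⟨⟨min k (d - 1), by lia⟩, ⟨k - min k (d - 1), by lia⟩, by simp⟩
  rw [integral_pow_spectralMeasure, hmoment, hinner, RCLike.re_to_real, Fin.val_castSucc]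

/-- Truncated moment problem on `[-1,1]` (one-dimensional case of Proposition 2.1):
if `μ₀ = 1`, `𝓜_d(μ)` is PSD and `𝓜_{d-1}(μ; 1-x²)` is PSD, then there is a Borel
probability measure `ν` on `ℝ` with `ν [-1,1] = 1` whose moments up to degree `d`
agree with `μ`. -/
theorem statement0 (d : ℕ) (hd : 1 ≤ d) (μ : ℕ → ℝ) (h0 : μ 0 = 1)
    (hM : (momentMatrix d μ).PosSemidef) (hM' : (locMomentMatrix d μ).PosSemidef) :
    ∃ ν : Measure ℝ, IsProbabilityMeasure ν ∧ ν (Set.Icc (-1 : ℝ) 1) = 1 ∧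
      ∀ k : ℕ, k ≤ d → ∫ x, x ^ k ∂ν = μ k := by
  obtain ⟨ν, _, hsupp, hmoment⟩ := statement0_general hM hM'
  have hν : IsProbabilityMeasure ν :=
    isProbabilityMeasure_iff_real.mpr (by simpa [h0] using hmoment 0 (by lia))
  exact ⟨ν, hν, (prob_compl_eq_zero_iff measurableSet_Icc).mp hsupp,
    fun k hk ↦ hmoment k (by lia)⟩
end

section
/- (Nonnegativity of the truncated Riesz functional; intermediate claim in the proof of Proposition 2.1.) Let d ≥ 1 and let μ = (μ_0, …, μ_{2d}) ∈ ℝ^{2d+1} be such that 𝓜_d(μ) is PSD and 𝓜_{d−1}(μ; 1−x²) is PSD. Then for every real polynomial q(x) = Σ_{k=0}^{d} q_k x^k of degree at most d satisfying q(x) ≥ 0 for all x ∈ [-1,1], one has Σ_{k=0}^{d} q_k μ_k ≥ 0. -/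
open MeasureTheory

/-!
A polynomial `p` of degree `n` that is nonnegative on `[a, b]` lies in the preordering generated by
`X - a` and `b - X`, without any degree overflow. Indeed a nonconstant `p` is divisible by one of
`X - c` with `c ≤ a`, `c - X` with `b ≤ c`, `(X - c) ^ 2` with `a < c < b` (an interior zero is a
local minimum, hence a double root), or `(X - u) ^ 2 + v ^ 2` (a pair of complex roots). Each of
these factors lies in the preordering truncated at its own degree, and the cofactor is again
nonnegative on `[a, b]`, so one can induct on the degree.

In even degree `2 * d` the identity `(b - a) * (X - a) = (X - a) ^ 2 + (X - a) * (b - X)`, and its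
mirror image for `b - X`, leave only the generators `t ^ 2` and `(X - a) * (b - X) * t ^ 2`. On
these, for `[a, b] = [-1, 1]`, the two positive semidefinite matrices make the Riesz functional
nonnegative. This reaches all polynomials of degree at most `2 * d`, not only `d`.
-/

open Polynomial

/-- The polynomials `∑ (X - a) ^ i * (b - X) ^ j * s ^ 2` all of whose summands have formal degree
`i + j + 2 * deg s` at most `n`: the preordering of the interval `[a, b]` truncated at degree `n`.
Allowing arbitrary exponents, rather than only `0` and `1`, makes products immediate. -/
noncomputable def truncatedPreordering (a b : ℝ) (n : ℕ) : AddSubmonoid ℝ[X] :=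
  .closure {p | ∃ (i j : ℕ) (s : ℝ[X]), i + j + 2 * s.natDegree ≤ n ∧
    p = (X - C a) ^ i * (C b - X) ^ j * s ^ 2}

namespace truncatedPreordering

variable {a b c : ℝ} {m n : ℕ} {p q s : ℝ[X]}

lemma generator_mem {i j : ℕ} (h : i + j + 2 * s.natDegree ≤ n) :
    (X - C a) ^ i * (C b - X) ^ j * s ^ 2 ∈ truncatedPreordering a b n :=
  AddSubmonoid.subset_closure ⟨i, j, s, h, rfl⟩

lemma mono (h : m ≤ n) : truncatedPreordering a b m ≤ truncatedPreordering a b n :=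
  AddSubmonoid.closure_mono fun _ ⟨i, j, s, hdeg, hp⟩ => ⟨i, j, s, hdeg.trans h, hp⟩

lemma mul_mem (hp : p ∈ truncatedPreordering a b m) (hq : q ∈ truncatedPreordering a b n) :
    p * q ∈ truncatedPreordering a b (m + n) := by
  have hpq := AddSubmonoid.mul_mem_mul hp hq
  rw [truncatedPreordering, truncatedPreordering, AddSubmonoid.closure_mul_closure] at hpq
  refine AddSubmonoid.closure_mono ?_ hpq
  rintro _ ⟨_, ⟨i, j, s, hs, rfl⟩, _, ⟨k, l, t, ht, rfl⟩, rfl⟩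
  have hst : (s * t).natDegree ≤ s.natDegree + t.natDegree := natDegree_mul_le
  exact ⟨i + k, j + l, s * t, by lia, by ring⟩

lemma sq_mem (h : 2 * s.natDegree ≤ n) : s ^ 2 ∈ truncatedPreordering a b n := by
  simpa using generator_mem (a := a) (b := b) (i := 0) (j := 0) (by simpa using h)

lemma C_mem (hc : 0 ≤ c) : C c ∈ truncatedPreordering a b n := by
  rw [← Real.sq_sqrt hc, C_pow]
  exact sq_mem (by simp)

lemma X_sub_C_mem (hc : c ≤ a) : X - C c ∈ truncatedPreordering a b 1 := by
  have hX : X - C a ∈ truncatedPreordering a b 1 := by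
    simpa using generator_mem (a := a) (b := b) (i := 1) (j := 0) (s := 1) (n := 1) (by simp)
  simpa [C_sub] using add_mem hX (C_mem (sub_nonneg.2 hc))

lemma C_sub_X_mem (hc : b ≤ c) : C c - X ∈ truncatedPreordering a b 1 := by
  have hX : C b - X ∈ truncatedPreordering a b 1 := by
    simpa using generator_mem (a := a) (b := b) (i := 0) (j := 1) (s := 1) (n := 1) (by simp)
  simpa [C_sub] using add_mem (C_mem (sub_nonneg.2 hc)) hX

lemma eval_nonneg (hp : p ∈ truncatedPreordering a b n) :
    ∀ x ∈ Set.Icc a b, 0 ≤ p.eval x := by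
  intro x ⟨hax, hxb⟩
  induction hp using AddSubmonoid.closure_induction with
  | zero => simp
  | add p q _ _ hp hq => simpa using add_nonneg hp hq
  | mem _ h =>
    obtain ⟨i, j, s, -, rfl⟩ := h
    have := sub_nonneg.2 hax
    have := sub_nonneg.2 hxb
    simp only [eval_mul, eval_pow, eval_sub, eval_X, eval_C]
    positivity

end truncatedPreordering

lemma natDegree_C_sub_X {R : Type*} [Ring R] [Nontrivial R] (c : R) :
    (C c - X).natDegree = 1 := by
  rw [← neg_sub, natDegree_neg, natDegree_X_sub_C]

section PolynomialsOnIntervals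

variable {a b c : ℝ} {p q : ℝ[X]}

lemma eval_nonneg_of_mul_nonneg (hab : a < b) (hp₀ : p ≠ 0)
    (hp : ∀ x ∈ Set.Icc a b, 0 ≤ p.eval x) (hpq : ∀ x ∈ Set.Icc a b, 0 ≤ (p * q).eval x) :
    ∀ x ∈ Set.Icc a b, 0 ≤ q.eval x := by
  have hclosed : IsClosed {x | 0 ≤ q.eval x} := isClosed_le continuous_const q.continuous
  have hdense : Dense {x | p.IsRoot x}ᶜ := (finite_setOfPred_isRoot hp₀).countable.dense_compl ℝ
  rw [← closure_Ioo hab.ne]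
  refine closure_minimal ((hdense.open_subset_closure_inter isOpen_Ioo).trans
    (closure_minimal ?_ hclosed)) hclosed
  rintro x ⟨hx, hroot⟩
  have hx' := Set.Ioo_subset_Icc_self hx
  have hpos : 0 < p.eval x := (hp x hx').lt_of_ne' hroot
  exact nonneg_of_mul_nonneg_right (eval_mul (R := ℝ) ▸ hpq x hx') hpos

lemma X_sub_C_sq_dvd_of_isLocalMin (hroot : p.IsRoot c)
    (hmin : IsLocalMin (fun x => p.eval x) c) : (X - C c) ^ 2 ∣ p := by
  rcases eq_or_ne p 0 with rfl | hp
  · exact dvd_zero _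
  have hderiv : p.derivative.IsRoot c := by simpa using hmin.deriv_eq_zero
  exact (le_rootMultiplicity_iff hp).1
    ((one_lt_rootMultiplicity_iff_isRoot hp).2 ⟨hroot, hderiv⟩)

lemma exists_mem_truncatedPreordering_dvd_of_isRoot
    (hp : ∀ x ∈ Set.Icc a b, 0 ≤ p.eval x) (hroot : p.IsRoot c) :
    ∃ s ∈ truncatedPreordering a b s.natDegree, s.natDegree ≠ 0 ∧ s ∣ p := by
  rcases le_or_gt c a with hca | hac
  · refine ⟨X - C c, ?_, by simp, dvd_iff_isRoot.2 hroot⟩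
    simpa using truncatedPreordering.X_sub_C_mem hca
  rcases le_or_gt b c with hbc | hcb
  · refine ⟨C c - X, ?_, by simp [natDegree_C_sub_X], ?_⟩
    · simpa [natDegree_C_sub_X] using truncatedPreordering.C_sub_X_mem hbc
    · rw [← neg_sub, neg_dvd]
      exact dvd_iff_isRoot.2 hroot
  · have hmin : IsLocalMin (fun x => p.eval x) c := by
      filter_upwards [Icc_mem_nhds hac hcb] with x hx
      simpa [hroot.eq_zero] using hp x hx
    refine ⟨(X - C c) ^ 2, truncatedPreordering.sq_mem ?_, ?_,
      X_sub_C_sq_dvd_of_isLocalMin hroot hmin⟩ <;> simp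

lemma exists_mem_truncatedPreordering_dvd_of_im_ne_zero {z : ℂ}
    (hz : aeval z p = 0) (him : z.im ≠ 0) :
    ∃ s ∈ truncatedPreordering a b s.natDegree, s.natDegree ≠ 0 ∧ s ∣ p := by
  have hsq : X ^ 2 - C (2 * z.re) * X + C (‖z‖ ^ 2) = (X - C z.re) ^ 2 + C (z.im ^ 2) := by
    rw [Complex.sq_norm, Complex.normSq_apply]
    simp only [C_mul, C_add, C_pow, C_ofNat]
    ring
  have hdeg : ((X - C z.re) ^ 2 + C (z.im ^ 2)).natDegree = 2 := by
    rw [natDegree_add_C, natDegree_pow, natDegree_X_sub_C]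
  refine ⟨(X - C z.re) ^ 2 + C (z.im ^ 2), ?_, hdeg ▸ two_ne_zero, ?_⟩
  · rw [hdeg]
    exact add_mem (truncatedPreordering.sq_mem (by simp))
      (truncatedPreordering.C_mem (sq_nonneg _))
  · exact hsq ▸ quadratic_dvd_of_aeval_eq_zero_im_ne_zero p hz him

lemma exists_mem_truncatedPreordering_dvd (hp : ∀ x ∈ Set.Icc a b, 0 ≤ p.eval x)
    (hdeg : p.natDegree ≠ 0) :
    ∃ s ∈ truncatedPreordering a b s.natDegree, s.natDegree ≠ 0 ∧ s ∣ p := by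
  obtain ⟨z, hz⟩ := IsAlgClosed.exists_aeval_eq_zero ℂ p
    (mt natDegree_eq_of_degree_eq_some hdeg)
  by_cases him : z.im = 0
  · lift z to ℝ using him
    refine exists_mem_truncatedPreordering_dvd_of_isRoot hp (c := z) ?_
    rw [← Complex.coe_algebraMap, aeval_algebraMap_apply] at hz
    simpa using hz
  · exact exists_mem_truncatedPreordering_dvd_of_im_ne_zero hz him

theorem mem_truncatedPreordering_of_nonneg (hab : a < b) {n : ℕ} (hdeg : p.natDegree ≤ n)
    (hp : ∀ x ∈ Set.Icc a b, 0 ≤ p.eval x) : p ∈ truncatedPreordering a b n := by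
  induction n using Nat.strong_induction_on generalizing p with
  | _ n ih =>
  by_cases hconst : p.natDegree = 0
  · obtain ⟨c, rfl⟩ := natDegree_eq_zero.1 hconst
    exact truncatedPreordering.C_mem (by simpa using hp a (Set.left_mem_Icc.2 hab.le))
  obtain ⟨s, hs, hsdeg, r, rfl⟩ := exists_mem_truncatedPreordering_dvd hp hconst
  have hsr₀ : s * r ≠ 0 := ne_zero_of_natDegree_gt (Nat.pos_of_ne_zero hconst)
  have hmul : (s * r).natDegree = s.natDegree + r.natDegree :=
    natDegree_mul (left_ne_zero_of_mul hsr₀) (right_ne_zero_of_mul hsr₀)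
  have hr : r ∈ truncatedPreordering a b (n - s.natDegree) :=
    ih _ (by lia) (by lia) (eval_nonneg_of_mul_nonneg hab (left_ne_zero_of_mul hsr₀)
      (truncatedPreordering.eval_nonneg hs) hp)
  exact truncatedPreordering.mono (by lia) (truncatedPreordering.mul_mem hs hr)

end PolynomialsOnIntervals

section LinearFunctionals

variable {a b : ℝ} {d : ℕ} {L : ℝ[X] →ₗ[ℝ] ℝ} {p s : ℝ[X]}

lemma map_mul_sq_nonneg_of_add_eq_C {u v : ℝ[X]} {c : ℝ} (hc : 0 < c) (huv : u + v = C c)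
    (hsq : 0 ≤ L ((u * s) ^ 2)) (hmul : 0 ≤ L (u * v * s ^ 2)) : 0 ≤ L (u * s ^ 2) := by
  have hsplit : c • (u * s ^ 2) = (u * s) ^ 2 + u * v * s ^ 2 := by
    rw [smul_eq_C_mul, ← huv]
    ring
  refine nonneg_of_mul_nonneg_right ?_ hc
  rw [← smul_eq_mul, ← map_smul, hsplit, map_add]
  exact add_nonneg hsq hmul

lemma map_pow_mul_pow_mul_sq_nonneg (hab : a < b)
    (hsq : ∀ t : ℝ[X], t.natDegree ≤ d → 0 ≤ L (t ^ 2))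
    (hloc : ∀ t : ℝ[X], t.natDegree < d → 0 ≤ L ((X - C a) * (C b - X) * t ^ 2))
    {i j : ℕ} (hdeg : i + j + 2 * s.natDegree ≤ 2 * d) :
    0 ≤ L ((X - C a) ^ i * (C b - X) ^ j * s ^ 2) := by
  have hleft {t : ℝ[X]} (ht : t.natDegree < d) : 0 ≤ L ((X - C a) * t ^ 2) := by
    refine map_mul_sq_nonneg_of_add_eq_C (v := C b - X) (sub_pos.2 hab)
      (by rw [C_sub]; ring) (hsq _ ?_) (hloc t ht)
    exact natDegree_mul_le.trans (by rw [natDegree_X_sub_C]; lia)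
  have hright {t : ℝ[X]} (ht : t.natDegree < d) : 0 ≤ L ((C b - X) * t ^ 2) := by
    refine map_mul_sq_nonneg_of_add_eq_C (v := X - C a) (sub_pos.2 hab)
      (by rw [C_sub]; ring) (hsq _ ?_) (mul_comm (X - C a) _ ▸ hloc t ht)
    exact natDegree_mul_le.trans (by rw [natDegree_C_sub_X]; lia)
  have hdeg_le (k l : ℕ) :
      ((X - C a) ^ k * (C b - X) ^ l * s).natDegree ≤ k + l + s.natDegree := by
    compute_degree
  obtain ⟨k, rfl | rfl⟩ := i.even_or_odd' <;> obtain ⟨l, rfl | rfl⟩ := j.even_or_odd'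
  · convert hsq _ ((hdeg_le k l).trans (by lia)) using 2
    ring
  · convert hright ((hdeg_le k l).trans_lt (by lia)) using 2
    ring
  · convert hleft ((hdeg_le k l).trans_lt (by lia)) using 2
    ring
  · convert hloc _ ((hdeg_le k l).trans_lt (by lia)) using 2
    ring

lemma map_nonneg_of_mem_truncatedPreordering (hab : a < b)
    (hsq : ∀ t : ℝ[X], t.natDegree ≤ d → 0 ≤ L (t ^ 2))
    (hloc : ∀ t : ℝ[X], t.natDegree < d → 0 ≤ L ((X - C a) * (C b - X) * t ^ 2))
    (hp : p ∈ truncatedPreordering a b (2 * d)) : 0 ≤ L p := by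
  induction hp using AddSubmonoid.closure_induction with
  | zero => simp
  | add p q _ _ hp hq => simpa using add_nonneg hp hq
  | mem _ h =>
    obtain ⟨i, j, s, hdeg, rfl⟩ := h
    exact map_pow_mul_pow_mul_sq_nonneg hab hsq hloc hdeg

theorem map_nonneg_of_eval_nonneg (hab : a < b)
    (hsq : ∀ t : ℝ[X], t.natDegree ≤ d → 0 ≤ L (t ^ 2))
    (hloc : ∀ t : ℝ[X], t.natDegree < d → 0 ≤ L ((X - C a) * (C b - X) * t ^ 2))
    (hdeg : p.natDegree ≤ 2 * d) (hp : ∀ x ∈ Set.Icc a b, 0 ≤ p.eval x) : 0 ≤ L p :=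
  map_nonneg_of_mem_truncatedPreordering hab hsq hloc
    (mem_truncatedPreordering_of_nonneg hab hdeg hp)

end LinearFunctionals

lemma map_mul_sq_nonneg_of_posSemidef (L : ℝ[X] →ₗ[ℝ] ℝ) (w : ℝ[X]) {n : ℕ} {s : ℝ[X]}
    (hL : (Matrix.of fun i j : Fin n => L (w * X ^ (i.1 + j.1))).PosSemidef)
    (hs : s.natDegree < n) : 0 ≤ L (w * s ^ 2) := by
  have hsum : s = ∑ i : Fin n, s.coeff i • X ^ i.1 := by
    rw [Fin.sum_univ_eq_sum_range (fun i => s.coeff i • (X : ℝ[X]) ^ i)]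
    simpa only [smul_eq_C_mul] using s.as_sum_range_C_mul_X_pow' hs
  refine (hL.dotProduct_mulVec_nonneg fun i => s.coeff i).trans_eq ?_
  conv_rhs => rw [hsum, sq, Finset.sum_mul_sum]
  simp only [Finset.mul_sum, map_sum, dotProduct, Matrix.mulVec,
    Matrix.of_apply, Pi.star_apply, star_trivial]
  refine Finset.sum_congr rfl fun i _ => Finset.sum_congr rfl fun j _ => ?_
  rw [smul_mul_smul_comm, mul_smul_comm, map_smul, ← pow_add, smul_eq_mul]
  ring

/-- The Riesz functional `∑ pₖ xᵏ ↦ ∑ pₖ μₖ` of the sequence `μ`. It is defined on polynomials of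
every degree; the truncation appears as a degree bound in the lemmas. -/
noncomputable def rieszFunctional (μ : ℕ → ℝ) : ℝ[X] →ₗ[ℝ] ℝ :=
  lsum fun k => μ k • LinearMap.id

section RieszFunctional

variable {d : ℕ} {μ : ℕ → ℝ} {p s : ℝ[X]}

lemma rieszFunctional_X_pow (k : ℕ) : rieszFunctional μ (X ^ k) = μ k := by
  simp [rieszFunctional, ← monomial_one_right_eq_X_pow, sum_monomial_index]

lemma rieszFunctional_sq_nonneg (hM : (momentMatrix d μ).PosSemidef) (hs : s.natDegree ≤ d) :
    0 ≤ rieszFunctional μ (s ^ 2) := by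
  have hmatrix : momentMatrix d μ =
      Matrix.of fun i j => rieszFunctional μ (1 * X ^ (i.1 + j.1)) := by
    ext i j
    simp [rieszFunctional_X_pow, momentMatrix]
  simpa using map_mul_sq_nonneg_of_posSemidef _ 1 (hmatrix ▸ hM) (Nat.lt_succ_of_le hs)

lemma rieszFunctional_one_sub_X_sq_mul_sq_nonneg (hM' : (locMomentMatrix d μ).PosSemidef)
    (hs : s.natDegree < d) : 0 ≤ rieszFunctional μ ((1 - X ^ 2) * s ^ 2) := by
  have hmatrix : locMomentMatrix d μ =
      Matrix.of fun i j => rieszFunctional μ ((1 - X ^ 2) * X ^ (i.1 + j.1)) := by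
    ext i j
    simp [rieszFunctional_X_pow, locMomentMatrix, sub_mul, ← pow_add, add_comm 2]
  exact map_mul_sq_nonneg_of_posSemidef _ _ (hmatrix ▸ hM') hs

theorem rieszFunctional_nonneg (hM : (momentMatrix d μ).PosSemidef)
    (hM' : (locMomentMatrix d μ).PosSemidef) (hdeg : p.natDegree ≤ 2 * d)
    (hp : ∀ x ∈ Set.Icc (-1 : ℝ) 1, 0 ≤ p.eval x) : 0 ≤ rieszFunctional μ p := by
  have hweight : (X - C (-1)) * (C 1 - X) = (1 - X ^ 2 : ℝ[X]) := by
    simp only [C_neg, C_1]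
    ring
  refine map_nonneg_of_eval_nonneg (by norm_num) (fun t => rieszFunctional_sq_nonneg hM)
    (fun t ht => ?_) hdeg hp
  rw [hweight]
  exact rieszFunctional_one_sub_X_sq_mul_sq_nonneg hM' ht

end RieszFunctional

theorem statement2_general {d n : ℕ} (hn : n ≤ 2 * d) {μ : ℕ → ℝ}
    (hM : (momentMatrix d μ).PosSemidef) (hM' : (locMomentMatrix d μ).PosSemidef) (q : ℕ → ℝ)
    (hq : ∀ x ∈ Set.Icc (-1 : ℝ) 1, 0 ≤ ∑ k ∈ Finset.range (n + 1), q k * x ^ k) :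
    0 ≤ ∑ k ∈ Finset.range (n + 1), q k * μ k := by
  have hdeg : (∑ k ∈ Finset.range (n + 1), q k • X ^ k : ℝ[X]).natDegree ≤ 2 * d :=
    natDegree_sum_le_of_forall_le _ _ fun k hk => (natDegree_smul_le _ _).trans
      ((natDegree_X_pow_le k).trans ((Finset.mem_range_succ_iff.1 hk).trans hn))
  simpa [rieszFunctional_X_pow] using
    rieszFunctional_nonneg hM hM' hdeg (by simpa [eval_finsetSum] using hq)

/-- Nonnegativity of the truncated Riesz functional: if `𝓜_d(μ)` and
`𝓜_{d-1}(μ; 1-x²)` are PSD, then for every polynomial `q` of degree at most `d`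
that is nonnegative on `[-1,1]`, we have `Σ_k q_k μ_k ≥ 0`. -/
theorem statement2 (d : ℕ) (hd : 1 ≤ d) (μ : ℕ → ℝ)
    (hM : (momentMatrix d μ).PosSemidef) (hM' : (locMomentMatrix d μ).PosSemidef)
    (q : ℕ → ℝ)
    (hq : ∀ x ∈ Set.Icc (-1 : ℝ) 1, 0 ≤ ∑ k ∈ Finset.range (d+1), q k * x ^ k) :
    0 ≤ ∑ k ∈ Finset.range (d+1), q k * μ k := by
  exact statement2_general (by lia) hM hM' q hq
end

section
/- (Appendix B tail-mass lemma for measures with bounded moments.) Let L, d ∈ ℕ with 2L > d, and let ν be a finite positive Borel measure on ℝ such that x ↦ |x|^{2L} is ν-integrable and such that the moments μ_k = ∫ x^k dν(x) satisfy |μ_k| ≤ 1 for all 0 ≤ k ≤ 2L. Let p(x) = Σ_{j=0}^d p_j x^j be a real polynomial of degree at most d. Then for every α > 0, | ∫_{{x : |x| > 1+α}} p(x) dν(x) | ≤ (d+1) · (max_{0≤j≤d} |p_j|) / (α (1+α)^{2L−(d+1)}). Consequently, ∫ p dν = ∫_{[-1-α, 1+α]} p dν + ε(α, L) with |ε(α,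 L)| bounded by the same quantity. -/
/-!
Where `R < |x|` and `1 ≤ R`, every monomial of `p` is dominated by `|x| ^ d`, and `|x| ^ d` by
`|x| ^ n / R ^ (n - d)`. Integrating, only the single top moment `∫ |x| ^ n` enters, and the tail is
at most `(∑ |q_j|) * ∫ |x| ^ n / R ^ (n - d)`. With `n = 2L` and `R = 1 + α`, the stated bound only
loses the factor `(1 + α) / α`, besides estimating `∑ |q_j|` by `(d + 1) * max |q_j|`.
-/

open MeasureTheory

lemma pow_le_pow_div_pow_sub {K : Type*} [Field K] [LinearOrder K] [IsStrictOrderedRing K]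
    {R t : K} (hR : 0 < R) (hRt : R ≤ t) {d n : ℕ} (hdn : d ≤ n) :
    t ^ d ≤ t ^ n / R ^ (n - d) := by
  have ht : 0 < t := hR.trans_le hRt
  rw [le_div_iff₀ (pow_pos hR _)]
  calc t ^ d * R ^ (n - d) ≤ t ^ d * t ^ (n - d) := by gcongr
    _ = t ^ n := pow_mul_pow_sub t hdn

lemma norm_sum_range_mul_pow_le {A : Type*} [SeminormedRing A] [NormOneClass A]
    (q : ℕ → A) (d : ℕ) {x : A} (hx : 1 ≤ ‖x‖) :
    ‖∑ j ∈ Finset.range (d + 1), q j * x ^ j‖ ≤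
      (∑ j ∈ Finset.range (d + 1), ‖q j‖) * ‖x‖ ^ d := by
  rw [Finset.sum_mul]
  refine norm_sum_le_of_le _ fun j hj => ?_
  have hjd : j ≤ d := Finset.mem_range_succ_iff.mp hj
  calc ‖q j * x ^ j‖ ≤ ‖q j‖ * ‖x ^ j‖ := norm_mul_le _ _
    _ ≤ ‖q j‖ * ‖x‖ ^ j := by gcongr; exact norm_pow_le x j
    _ ≤ ‖q j‖ * ‖x‖ ^ d := by gcongr

section NormedGroup

variable {Ω E : Type*} [MeasurableSpace Ω] {μ : Measure Ω} [SeminormedAddCommGroup E] {f : Ω → E}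
  {d n : ℕ} {R : ℝ}

lemma nullMeasurableSet_lt_norm (hf : AEStronglyMeasurable f μ) (R : ℝ) :
    NullMeasurableSet {ω | R < ‖f ω‖} μ :=
  nullMeasurableSet_lt aemeasurable_const hf.norm.aemeasurable

lemma ae_restrict_norm_pow_le (hf : AEStronglyMeasurable f μ) (hR : 0 < R) (hdn : d ≤ n) :
    ∀ᵐ ω ∂μ.restrict {ω | R < ‖f ω‖}, ‖f ω‖ ^ d ≤ ‖f ω‖ ^ n / R ^ (n - d) := by
  filter_upwards [ae_restrict_mem₀ (nullMeasurableSet_lt_norm hf R)] with ω (hω : R < ‖f ω‖)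
  exact pow_le_pow_div_pow_sub hR hω.le hdn

lemma integrableOn_norm_pow_of_le (hf : AEStronglyMeasurable f μ) (hR : 0 < R) (hdn : d ≤ n)
    (hint : Integrable (fun ω => ‖f ω‖ ^ n) μ) :
    IntegrableOn (fun ω => ‖f ω‖ ^ d) {ω | R < ‖f ω‖} μ := by
  refine (hint.div_const (R ^ (n - d))).integrableOn.mono' (hf.norm.pow d).restrict ?_
  simpa only [norm_pow, norm_norm] using ae_restrict_norm_pow_le hf hR hdn

lemma setIntegral_norm_pow_le (hf : AEStronglyMeasurable f μ) (hR : 0 < R) (hdn : d ≤ n)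
    (hint : Integrable (fun ω => ‖f ω‖ ^ n) μ) :
    ∫ ω in {ω | R < ‖f ω‖}, ‖f ω‖ ^ d ∂μ ≤ (∫ ω, ‖f ω‖ ^ n ∂μ) / R ^ (n - d) := by
  have hint' : Integrable (fun ω => ‖f ω‖ ^ n / R ^ (n - d)) μ := hint.div_const _
  calc ∫ ω in {ω | R < ‖f ω‖}, ‖f ω‖ ^ d ∂μ
      ≤ ∫ ω in {ω | R < ‖f ω‖}, ‖f ω‖ ^ n / R ^ (n - d) ∂μ :=
        integral_mono_ae (integrableOn_norm_pow_of_le hf hR hdn hint) hint'.integrableOn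
          (ae_restrict_norm_pow_le hf hR hdn)
    _ ≤ ∫ ω, ‖f ω‖ ^ n / R ^ (n - d) ∂μ :=
        setIntegral_le_integral hint' (.of_forall fun ω => by positivity)
    _ = (∫ ω, ‖f ω‖ ^ n ∂μ) / R ^ (n - d) := integral_div _ _

end NormedGroup

section NormedRing

variable {Ω A : Type*} [MeasurableSpace Ω] {μ : Measure Ω} [NormedRing A] [NormOneClass A]
  {f : Ω → A} {d n : ℕ} {R : ℝ}

lemma integrable_sum_range_mul_pow [IsFiniteMeasure μ] (hf : AEStronglyMeasurable f μ)
    (hdn : d ≤ n) (hint : Integrable (fun ω => ‖f ω‖ ^ n) μ) (q : ℕ → A) :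
    Integrable (fun ω => ∑ j ∈ Finset.range (d + 1), q j * f ω ^ j) μ := by
  refine integrable_finsetSum _ fun j hj => Integrable.const_mul ?_ (q j)
  have hjn : j ≤ n := (Finset.mem_range_succ_iff.mp hj).trans hdn
  exact (integrable_norm_pow_of_le hf hjn hint).mono' (hf.pow j)
    (.of_forall fun ω => norm_pow_le (f ω) j)

lemma norm_setIntegral_sum_range_mul_pow_le [NormedSpace ℝ A] (hf : AEStronglyMeasurable f μ)
    (hdn : d ≤ n) (hint : Integrable (fun ω => ‖f ω‖ ^ n) μ) (hR : 1 ≤ R) (q : ℕ → A) :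
    ‖∫ ω in {ω | R < ‖f ω‖}, (∑ j ∈ Finset.range (d + 1), q j * f ω ^ j) ∂μ‖ ≤
      (∑ j ∈ Finset.range (d + 1), ‖q j‖) * ((∫ ω, ‖f ω‖ ^ n ∂μ) / R ^ (n - d)) := by
  have hR₀ : 0 < R := one_pos.trans_le hR
  have hle : ∀ᵐ ω ∂μ.restrict {ω | R < ‖f ω‖}, ‖∑ j ∈ Finset.range (d + 1), q j * f ω ^ j‖ ≤
      (∑ j ∈ Finset.range (d + 1), ‖q j‖) * ‖f ω‖ ^ d := by
    filter_upwards [ae_restrict_mem₀ (nullMeasurableSet_lt_norm hf R)] with ω (hω : R < ‖f ω‖)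
    exact norm_sum_range_mul_pow_le q d (hR.trans hω.le)
  calc ‖∫ ω in {ω | R < ‖f ω‖}, (∑ j ∈ Finset.range (d + 1), q j * f ω ^ j) ∂μ‖
      ≤ ∫ ω in {ω | R < ‖f ω‖}, (∑ j ∈ Finset.range (d + 1), ‖q j‖) * ‖f ω‖ ^ d ∂μ :=
        norm_integral_le_of_norm_le
          ((integrableOn_norm_pow_of_le hf hR₀ hdn hint).const_mul _) hle
    _ = (∑ j ∈ Finset.range (d + 1), ‖q j‖) * ∫ ω in {ω | R < ‖f ω‖}, ‖f ω‖ ^ d ∂μ :=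
        integral_const_mul _ _
    _ ≤ (∑ j ∈ Finset.range (d + 1), ‖q j‖) * ((∫ ω, ‖f ω‖ ^ n ∂μ) / R ^ (n - d)) := by
        gcongr
        exact setIntegral_norm_pow_le hf hR₀ hdn hint

end NormedRing

lemma integral_sub_setIntegral_norm_le {Ω E F : Type*} [MeasurableSpace Ω] {μ : Measure Ω}
    [SeminormedAddCommGroup E] [NormedAddCommGroup F] [NormedSpace ℝ F] {f : Ω → E} {g : Ω → F}
    (hf : AEStronglyMeasurable f μ) (hg : Integrable g μ) (R : ℝ) :
    (∫ ω, g ω ∂μ) - ∫ ω in {ω | ‖f ω‖ ≤ R}, g ω ∂μ = ∫ ω in {ω | R < ‖f ω‖}, g ω ∂μ := by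
  have hcompl : {ω | ‖f ω‖ ≤ R} = {ω | R < ‖f ω‖}ᶜ := by
    ext ω
    simp only [Set.mem_compl_iff, Set.mem_ofPred_eq, not_lt]
  rw [hcompl, sub_eq_iff_eq_add, integral_add_compl₀ (nullMeasurableSet_lt_norm hf R) hg]

theorem statement13_general {Ω A : Type*} [MeasurableSpace Ω] {μ : Measure Ω} [NormedRing A]
    [NormOneClass A] [NormedSpace ℝ A] {f : Ω → A} (hf : AEStronglyMeasurable f μ) {d n : ℕ}
    (hdn : d ≤ n) (hint : Integrable (fun ω => ‖f ω‖ ^ n) μ) {q : ℕ → A}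
    (hp : Integrable (fun ω => ∑ j ∈ Finset.range (d + 1), q j * f ω ^ j) μ)
    {R : ℝ} (hR : 1 ≤ R) :
    ‖∫ ω in {ω | R < ‖f ω‖}, (∑ j ∈ Finset.range (d + 1), q j * f ω ^ j) ∂μ‖ ≤
      (∑ j ∈ Finset.range (d + 1), ‖q j‖) * ((∫ ω, ‖f ω‖ ^ n ∂μ) / R ^ (n - d)) ∧
    ‖(∫ ω, (∑ j ∈ Finset.range (d + 1), q j * f ω ^ j) ∂μ) -
        ∫ ω in {ω | ‖f ω‖ ≤ R}, (∑ j ∈ Finset.range (d + 1), q j * f ω ^ j) ∂μ‖ ≤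
      (∑ j ∈ Finset.range (d + 1), ‖q j‖) * ((∫ ω, ‖f ω‖ ^ n ∂μ) / R ^ (n - d)) := by
  have htail := norm_setIntegral_sum_range_mul_pow_le hf hdn hint hR q
  exact ⟨htail, (integral_sub_setIntegral_norm_le hf hp R).symm ▸ htail⟩

lemma setOf_norm_le_eq_Icc (r : ℝ) : {x : ℝ | ‖x‖ ≤ r} = Set.Icc (-r) r := by
  ext x
  rw [Set.mem_ofPred_eq, Set.mem_Icc, Real.norm_eq_abs, abs_le]

lemma integral_norm_pow_le_of_abs_integral_pow_le {Ω : Type*} [MeasurableSpace Ω] {μ : Measure Ω}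
    {f : Ω → ℝ} {n : ℕ} (hn : Even n) {m : ℝ} (h : |∫ ω, f ω ^ n ∂μ| ≤ m) :
    ∫ ω, ‖f ω‖ ^ n ∂μ ≤ m := by
  simpa only [Real.norm_eq_abs, hn.pow_abs] using (abs_le.mp h).2

lemma sum_le_card_nsmul_sup' {ι M : Type*} [AddCommMonoid M] [LinearOrder M]
    [IsOrderedAddMonoid M] {s : Finset ι} (hs : s.Nonempty) (a : ι → M) :
    ∑ i ∈ s, a i ≤ s.card • s.sup' hs a :=
  s.sum_le_card_nsmul a _ fun _ hi => Finset.le_sup' a hi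

lemma mul_one_add_pow_le {K : Type*} [CommSemiring K] [PartialOrder K] [IsOrderedRing K]
    {α : K} (hα : 0 ≤ α) (k : ℕ) : α * (1 + α) ^ k ≤ (1 + α) ^ (k + 1) := by
  rw [pow_succ']
  exact mul_le_mul_of_nonneg_right (le_add_of_nonneg_left zero_le_one)
    (pow_nonneg (add_nonneg zero_le_one hα) k)

lemma sum_norm_mul_div_one_add_pow_le (q : ℕ → ℝ) {m α : ℝ} (hm : m ≤ 1) (hα : 0 < α)
    {d n : ℕ} (hdn : d < n) :
    (∑ j ∈ Finset.range (d + 1), ‖q j‖) * (m / (1 + α) ^ (n - d)) ≤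
      (d + 1 : ℝ) * (Finset.range (d + 1)).sup' Finset.nonempty_range_add_one (fun j => |q j|) /
        (α * (1 + α) ^ (n - (d + 1))) := by
  have hsum : ∑ j ∈ Finset.range (d + 1), ‖q j‖ ≤
      (d + 1 : ℝ) * (Finset.range (d + 1)).sup' Finset.nonempty_range_add_one
        (fun j => |q j|) := by
    simpa using sum_le_card_nsmul_sup' Finset.nonempty_range_add_one fun j => |q j|
  have hpow : α * (1 + α) ^ (n - (d + 1)) ≤ (1 + α) ^ (n - d) := by
    have hexp : n - d = n - (d + 1) + 1 := by omega
    exact hexp ▸ mul_one_add_pow_le hα.le _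
  calc (∑ j ∈ Finset.range (d + 1), ‖q j‖) * (m / (1 + α) ^ (n - d))
      ≤ (∑ j ∈ Finset.range (d + 1), ‖q j‖) * (1 / (α * (1 + α) ^ (n - (d + 1)))) := by gcongr
    _ = (∑ j ∈ Finset.range (d + 1), ‖q j‖) / (α * (1 + α) ^ (n - (d + 1))) := mul_one_div _ _
    _ ≤ _ := by gcongr

/-- Appendix B tail-mass lemma: if `ν` is a finite positive Borel measure on `ℝ` whose
moments up to order `2L` are bounded by `1` in absolute value, and `p` is a polynomial
of degree at most `d < 2L` with coefficients `q_j`, then for any `α > 0` the integral of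
`p` over `{|x| > 1+α}` is bounded by `(d+1)·max_j |q_j| / (α (1+α)^{2L-(d+1)})`;
consequently `∫ p dν` equals `∫_{[-1-α,1+α]} p dν` up to an error of the same size. -/
theorem statement13 (L d : ℕ) (hLd : d < 2 * L)
    (ν : Measure ℝ) [IsFiniteMeasure ν]
    (hint : Integrable (fun x => |x| ^ (2 * L)) ν)
    (hmom : ∀ k ≤ 2 * L, |∫ x, x ^ k ∂ν| ≤ 1)
    (q : ℕ → ℝ) (α : ℝ) (hα : 0 < α) :
    |∫ x in {x : ℝ | 1 + α < |x|}, (∑ j ∈ Finset.range (d+1), q j * x ^ j) ∂ν| ≤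
      (d + 1 : ℝ) *
        ((Finset.range (d+1)).sup' (Finset.nonempty_range_iff.mpr (Nat.succ_ne_zero d))
          fun j => |q j|) / (α * (1 + α) ^ (2 * L - (d + 1))) ∧
    |(∫ x, (∑ j ∈ Finset.range (d+1), q j * x ^ j) ∂ν) -
        ∫ x in Set.Icc (-1 - α) (1 + α), (∑ j ∈ Finset.range (d+1), q j * x ^ j) ∂ν| ≤
      (d + 1 : ℝ) *
        ((Finset.range (d+1)).sup' (Finset.nonempty_range_iff.mpr (Nat.succ_ne_zero d))
          fun j => |q j|) / (α * (1 + α) ^ (2 * L - (d + 1))) := by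
  have hconst := sum_norm_mul_div_one_add_pow_le q
    (integral_norm_pow_le_of_abs_integral_pow_le (even_two_mul L) (hmom _ le_rfl)) hα hLd
  have hp := integrable_sum_range_mul_pow (f := fun x => x) aestronglyMeasurable_id hLd.le hint q
  rw [← neg_add', ← setOf_norm_le_eq_Icc]
  exact (statement13_general aestronglyMeasurable_id hLd.le hint hp
    (le_add_of_nonneg_right hα.le)).imp (·.trans hconst) (·.trans hconst)
end

section
/- (Theorem B.1, representation of polynomials nonnegative on [-1,1] (Powers–Reznick, from Fekete).) Let p be a real polynomial in one variable of degree d with p(x) ≥ 0 for all x ∈ [-1,1]. Then there exist real polynomials f and g, with deg f ≤ d and deg g ≤ d − 1, such that p(x) = (f(x))² + (1 − x²)·(g(x))² for all x ∈ ℝ. -/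
/-!
A polynomial of the form `f² + (1 - X²) g²` is the norm of `f + g √(X² - 1)`, so these polynomials
are closed under multiplication. It therefore suffices to split off one factor of this form at a
complex root `z` of `p`. If `z` is not real, write `z = cos w`; then `(X - z)(X - conj z)` is
represented by means of `cos (Re w)` and `exp (Im w)`. A real root outside `(-1, 1)` gives a linear
factor without sign change on `[-1, 1]`, and a root inside is a local minimum of `p`, hence double.
-/

section

open Polynomial

theorem natDegree_le_natDegree_X_mul {R : Type*} [Semiring R] (p : R[X]) :
    p.natDegree ≤ (X * p).natDegree := by
  obtain rfl | hp := eq_or_ne p 0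
  · rw [mul_zero]
  · have : Nontrivial R := nontrivial_iff.1 ⟨p, 0, hp⟩
    rw [natDegree_X_mul hp]
    exact Nat.le_succ _

theorem eval_nonneg_of_eval_mul_nonneg {K : Type*} [Field K] [LinearOrder K]
    [IsStrictOrderedRing K] [TopologicalSpace K] [OrderTopology K] {s : Set K} {u q : K[X]}
    (hs : s ⊆ closure (interior s)) (hu₀ : u ≠ 0) (hu : ∀ x ∈ s, 0 ≤ u.eval x)
    (huq : ∀ x ∈ s, 0 ≤ (u * q).eval x) : ∀ x ∈ s, 0 ≤ q.eval x := by
  have hdense : Dense (Set.univ \ {x | u.IsRoot x}) :=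
    dense_univ.sdiff_finite (finite_setOfPred_isRoot hu₀)
  have hclosed : IsClosed {x | 0 ≤ q.eval x} := isClosed_le continuous_const q.continuous
  have hsub : interior s ∩ (Set.univ \ {x | u.IsRoot x}) ⊆ {x | 0 ≤ q.eval x} := by
    rintro x ⟨hx, -, hux⟩
    have hxs := interior_subset hx
    exact nonneg_of_mul_nonneg_right (by simpa only [eval_mul] using huq x hxs)
      ((hu x hxs).lt_of_ne' hux)
  have hinterior : interior s ⊆ {x | 0 ≤ q.eval x} :=
    (hdense.open_subset_closure_inter isOpen_interior).trans (closure_minimal hsub hclosed)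
  exact hs.trans (closure_minimal hinterior hclosed)

theorem sq_X_sub_C_dvd_of_isLocalMin {p : ℝ[X]} {r : ℝ} (hr : p.IsRoot r)
    (hmin : IsLocalMin (fun x => p.eval x) r) : (X - C r) ^ 2 ∣ p := by
  obtain rfl | hp := eq_or_ne p 0
  · exact dvd_zero _
  have hderiv : p.derivative.IsRoot r := by
    rw [IsRoot, ← Polynomial.deriv]
    exact hmin.deriv_eq_zero
  exact (le_rootMultiplicity_iff hp).1 ((one_lt_rootMultiplicity_iff_isRoot hp).2 ⟨hr, hderiv⟩)

theorem re_cos (w : ℂ) : (Complex.cos w).re = Real.cos w.re * Real.cosh w.im := by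
  rw [Complex.cos_eq]
  simp [← Complex.ofReal_cos, ← Complex.ofReal_sin, ← Complex.ofReal_cosh, ← Complex.ofReal_sinh]

theorem im_cos (w : ℂ) : (Complex.cos w).im = -(Real.sin w.re * Real.sinh w.im) := by
  rw [Complex.cos_eq]
  simp [← Complex.ofReal_cos, ← Complex.ofReal_sin, ← Complex.ofReal_cosh, ← Complex.ofReal_sinh]

theorem sq_norm_cos (w : ℂ) :
    ‖Complex.cos w‖ ^ 2 = Real.cos w.re ^ 2 + Real.sinh w.im ^ 2 := by
  rw [Complex.sq_norm, Complex.normSq_apply, re_cos, im_cos]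
  linear_combination Real.cos w.re ^ 2 * Real.cosh_sq w.im
    + Real.sinh w.im ^ 2 * Real.sin_sq_add_cos_sq w.re

/-- The representations `p = f² + (1 - X²) g²` of the theorem. The degree bound is put on `X * g`
because `g.natDegree ≤ p.natDegree - 1`, with truncated subtraction, would not add up in
products. -/
def HasFeketeRep {R : Type*} [CommRing R] (p : R[X]) : Prop :=
  ∃ f g : R[X], f.natDegree ≤ p.natDegree ∧ (X * g).natDegree ≤ p.natDegree ∧
    p = f ^ 2 + (1 - X ^ 2) * g ^ 2

namespace HasFeketeRep

section Ring

variable {R : Type*} [CommRing R] [NoZeroDivisors R]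

protected theorem sq (p : R[X]) : HasFeketeRep (p ^ 2) :=
  ⟨p, 0, by rw [natDegree_pow]; lia, by simp, by ring⟩

theorem mul {p q : R[X]} (hp : HasFeketeRep p) (hq : HasFeketeRep q) : HasFeketeRep (p * q) := by
  obtain rfl | hp₀ := eq_or_ne p 0
  · simpa only [zero_mul] using hp
  obtain rfl | hq₀ := eq_or_ne q 0
  · simpa only [mul_zero] using hq
  have hdeg : (p * q).natDegree = p.natDegree + q.natDegree := natDegree_mul hp₀ hq₀
  obtain ⟨f₁, g₁, hf₁, hg₁, hp⟩ := hp
  obtain ⟨f₂, g₂, hf₂, hg₂, hq⟩ := hq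
  have hg₁' : g₁.natDegree ≤ p.natDegree := (natDegree_le_natDegree_X_mul g₁).trans hg₁
  have hg₂' : g₂.natDegree ≤ q.natDegree := (natDegree_le_natDegree_X_mul g₂).trans hg₂
  refine ⟨f₁ * f₂ + ((X * g₁) * (X * g₂) - g₁ * g₂), f₁ * g₂ + g₁ * f₂, ?_, ?_, ?_⟩
  · rw [hdeg]
    exact natDegree_add_le_of_degree_le (natDegree_mul_le_of_le hf₁ hf₂)
      ((natDegree_sub_le_of_le (natDegree_mul_le_of_le hg₁ hg₂)
        (natDegree_mul_le_of_le hg₁' hg₂')).trans (max_self _).le)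
  · rw [hdeg, show X * (f₁ * g₂ + g₁ * f₂) = f₁ * (X * g₂) + (X * g₁) * f₂ by ring]
    exact natDegree_add_le_of_degree_le (natDegree_mul_le_of_le hf₁ hg₂)
      (natDegree_mul_le_of_le hg₁ hf₂)
  · rw [hp, hq]
    ring

end Ring

theorem eval_nonneg {R : Type*} [CommRing R] [LinearOrder R] [IsStrictOrderedRing R] {p : R[X]}
    (hp : HasFeketeRep p) {x : R} (hx : x ∈ Set.Icc (-1) 1) : 0 ≤ p.eval x := by
  obtain ⟨f, g, -, -, rfl⟩ := hp
  have h : 0 ≤ 1 - x ^ 2 := by nlinarith [hx.1, hx.2]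
  simp only [eval_add, eval_mul, eval_sub, eval_pow, eval_one, eval_X]
  positivity

theorem linear {a b : ℝ} (h : |a| ≤ b) : HasFeketeRep (C a * X + C b) := by
  obtain ⟨h₁, h₂⟩ := abs_le.1 h
  obtain rfl | ha := eq_or_ne a 0
  · have hb : C 0 * X + C b = C √b ^ 2 := by
      rw [← C_pow, Real.sq_sqrt (by linarith), C_0, zero_mul, zero_add]
    exact hb ▸ HasFeketeRep.sq (C √b)
  obtain ⟨α, β, hmul, hadd⟩ : ∃ α β : ℝ, 2 * α * β = a ∧ α ^ 2 + β ^ 2 = b := by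
    have h₃ := Real.sq_sqrt (show 0 ≤ b + a by linarith)
    have h₄ := Real.sq_sqrt (show 0 ≤ b - a by linarith)
    exact ⟨(√(b + a) - √(b - a)) / 2, (√(b + a) + √(b - a)) / 2, by linarith, by linarith⟩
  refine ⟨C α * X + C β, C α, ?_, ?_, ?_⟩
  · rw [natDegree_linear ha]
    exact natDegree_linear_le
  · rw [natDegree_linear ha]
    compute_degree
  · rw [← hmul, ← hadd]
    simp only [map_mul, map_add, map_pow, map_ofNat]
    ring

theorem quadratic (z : ℂ) : HasFeketeRep (X ^ 2 - C (2 * z.re) * X + C (‖z‖ ^ 2)) := by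
  obtain ⟨w, rfl⟩ := Complex.cos_surjective z
  rw [re_cos, sq_norm_cos]
  set c := Real.cos w.re
  set t := Real.cosh w.im
  set s := Real.sinh w.im
  have hdeg : (X ^ 2 - C (2 * (c * t)) * X + C (c ^ 2 + s ^ 2)).natDegree = 2 := by
    compute_degree!
  have hts : (C t : ℝ[X]) ^ 2 = C s ^ 2 + 1 := by
    rw [← C_pow, Real.cosh_sq, C_add, C_pow, C_1]
  rw [HasFeketeRep, hdeg]
  refine ⟨C (t + s) * X ^ 2 - C c * X - C s, C (t + s) * X - C c,
    by compute_degree, by compute_degree, ?_⟩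
  simp only [map_mul, map_add, map_pow, map_ofNat]
  linear_combination (- X ^ 2) * hts

end HasFeketeRep

theorem exists_hasFeketeRep_dvd_of_isRoot {p : ℝ[X]} (hp : ∀ x ∈ Set.Icc (-1 : ℝ) 1, 0 ≤ p.eval x)
    {r : ℝ} (hr : p.IsRoot r) : ∃ u : ℝ[X], HasFeketeRep u ∧ 0 < u.natDegree ∧ u ∣ p := by
  rcases le_or_gt r (-1) with hle | hgt
  · refine ⟨C 1 * X + C (-r), .linear (by rw [abs_one]; linarith), ?_, ?_⟩
    · rw [natDegree_linear one_ne_zero]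
      exact one_pos
    · rwa [C_1, one_mul, C_neg, ← sub_eq_add_neg, dvd_iff_isRoot]
  rcases le_or_gt 1 r with hge | hlt
  · refine ⟨C (-1) * X + C r, .linear (by rwa [abs_neg, abs_one]), ?_, ?_⟩
    · rw [natDegree_linear (neg_ne_zero.2 one_ne_zero)]
      exact one_pos
    · rwa [C_neg, C_1, neg_one_mul, neg_add_eq_sub, ← neg_sub, neg_dvd, dvd_iff_isRoot]
  · have hmin : IsLocalMin (fun x => p.eval x) r := by
      filter_upwards [Icc_mem_nhds hgt hlt] with x hx
      exact hr.eq_zero.trans_le (hp x hx)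
    exact ⟨(X - C r) ^ 2, .sq _, by simp, sq_X_sub_C_dvd_of_isLocalMin hr hmin⟩

theorem exists_hasFeketeRep_dvd {p : ℝ[X]} (hp : ∀ x ∈ Set.Icc (-1 : ℝ) 1, 0 ≤ p.eval x)
    (hdeg : 0 < p.natDegree) : ∃ u : ℝ[X], HasFeketeRep u ∧ 0 < u.natDegree ∧ u ∣ p := by
  obtain ⟨z, hz⟩ := IsAlgClosed.exists_aeval_eq_zero ℂ p
    (natDegree_pos_iff_degree_pos.1 hdeg).ne'
  by_cases him : z.im = 0
  · obtain ⟨r, rfl⟩ : ∃ r : ℝ, (r : ℂ) = z := ⟨z.re, Complex.ext rfl him.symm⟩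
    have hr : p.IsRoot r := by
      rwa [← Complex.coe_algebraMap, aeval_algebraMap_eq_zero_iff, coe_aeval_eq_eval] at hz
    exact exists_hasFeketeRep_dvd_of_isRoot hp hr
  · have hquad : (X ^ 2 - C (2 * z.re) * X + C (‖z‖ ^ 2)).natDegree = 2 := by compute_degree!
    exact ⟨_, .quadratic z, two_pos.trans_eq hquad.symm,
      quadratic_dvd_of_aeval_eq_zero_im_ne_zero p hz him⟩

theorem hasFeketeRep_of_nonneg (p : ℝ[X]) (hp : ∀ x ∈ Set.Icc (-1 : ℝ) 1, 0 ≤ p.eval x) :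
    HasFeketeRep p := by
  induction hn : p.natDegree using Nat.strong_induction_on generalizing p with
  | _ n ih =>
  subst hn
  obtain hconst | hpos := p.natDegree.eq_zero_or_pos
  · obtain ⟨c, rfl⟩ := natDegree_eq_zero.1 hconst
    have hc : 0 ≤ c := by simpa only [eval_C] using hp 0 (by norm_num)
    simpa only [C_0, zero_mul, zero_add] using HasFeketeRep.linear (abs_zero.trans_le hc)
  obtain ⟨u, hu, hudeg, q, rfl⟩ := exists_hasFeketeRep_dvd hp hpos
  have hu₀ : u ≠ 0 := ne_zero_of_natDegree_gt hudeg
  have hq₀ : q ≠ 0 := right_ne_zero_of_mul (ne_zero_of_natDegree_gt hpos)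
  have hq : ∀ x ∈ Set.Icc (-1 : ℝ) 1, 0 ≤ q.eval x :=
    eval_nonneg_of_eval_mul_nonneg (closure_interior_Icc (by norm_num)).ge hu₀
      (fun _ hx => hu.eval_nonneg hx) hp
  have hlt : q.natDegree < (u * q).natDegree := by
    rw [natDegree_mul hu₀ hq₀]
    lia
  exact hu.mul (ih _ hlt q hq rfl)

end

/-- Theorem B.1 (Powers–Reznick, from Fekete): a real polynomial `p` of degree `d`
that is nonnegative on `[-1,1]` can be written as `p = f² + (1 - x²)·g²`, where
`deg f ≤ d` and `deg g ≤ d - 1`. -/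
theorem statement15 (p : Polynomial ℝ)
    (hp : ∀ x ∈ Set.Icc (-1 : ℝ) 1, 0 ≤ p.eval x) :
    ∃ f g : Polynomial ℝ, f.natDegree ≤ p.natDegree ∧ g.natDegree ≤ p.natDegree - 1 ∧
      p = f ^ 2 + (1 - Polynomial.X ^ 2) * g ^ 2 := by
  obtain ⟨f, g, hf, hg, hrep⟩ := hasFeketeRep_of_nonneg p hp
  refine ⟨f, g, hf, ?_, hrep⟩
  obtain rfl | hg₀ := eq_or_ne g 0
  · simp
  · rw [Polynomial.natDegree_X_mul hg₀] at hg
    lia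
end
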